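/- Strong implies weak formulation: Let M ≥ 0 and let u ∈ D_M with Δu = f in the strong sense, i.e. lim_{m→∞} max_{p ∈ V_m ∖ V_M} |N^{m+1} H_m u(p) − f(p)| = 0 for a continuous f. Then for every v ∈ dom_M E, E(u,v) = −∫_{Σ_N^+} f v dμ. -/

import Mathlib

open Filter Topology MeasureTheory Finset Classical

noncomputable section

/-- The one-sided full shift space `Σ_N^+` on `N` symbols; coordinates are indexed
from `0`, so the paper's `x_1 x_2 ⋯` is `x 0, x 1, ⋯` here. It carries the product
of the discrete topology on `Fin N`. -/
abbrev SSp (N : ℕ) : Type := ℕ → Fin N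

/-- The level-`m` vertex set `V_m = {p : p_i = p_{i+1} for all i ≥ m+1}` (1-based),
i.e. the sequences that are constant from (0-based) coordinate `m` on.  It is
realized as a `Finset` via the parametrization by the first `m+1` coordinates;
see `mem_V` for the defining property. -/
noncomputable def V (N m : ℕ) : Finset (SSp N) :=
  (Finset.univ : Finset (Fin (m + 1) → Fin N)).image
    (fun w j => w ⟨min j m, by omega⟩)

lemma const_from (N m : ℕ) (p : SSp N) (h : ∀ i, m ≤ i → p i = p (i + 1)) :
    ∀ j, m ≤ j → p j = p m := by
  intro j hj
  induction j with
  | zero => have : m = 0 := by omega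
            simp [this]
  | succ k ih =>
      rcases Nat.lt_or_ge k m with hk | hk
      · have : m = k + 1 := by omega
        simp [this]
      · rw [← h k hk]
        exact ih hk

/-- Membership in `V N m` is exactly the paper's condition
`p_i = p_{i+1}` for all `i ≥ m+1` (1-based), i.e. `p i = p (i+1)` for all `i ≥ m`. -/
lemma mem_V {N m : ℕ} {p : SSp N} :
    p ∈ V N m ↔ ∀ i, m ≤ i → p i = p (i + 1) := by
  classical
  constructor
  · intro hp i hi
    simp only [V, Finset.mem_image] at hp
    obtain ⟨w, -, rfl⟩ := hp
    have h1 : min i m = m := by omega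
    have h2 : min (i + 1) m = m := by omega
    simp [h1, h2]
  · intro h
    simp only [V, Finset.mem_image]
    refine ⟨fun j => p j, Finset.mem_univ _, ?_⟩
    funext j
    rcases Nat.lt_or_ge j m with hj | hj
    · have : min j m = j := by omega
      simp [this]
    · have : min j m = m := by omega
      simp only [this]
      exact (const_from N m p h j hj).symm

/-- The deleted neighbourhood `U_{p,m} = {q ∈ V_m : q ≠ p, q_i = p_i for 1 ≤ i ≤ m}`
(1-based), i.e. `q` agrees with `p` on the first `m` (0-based: `i < m`) coordinates. -/
noncomputable def U (N m : ℕ) (p : SSp N) : Finset (SSp N) :=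
  (V N m).filter (fun q => q ≠ p ∧ ∀ i, i < m → q i = p i)

/-- `κ_p = min {j : p ∈ V_j}`. -/
noncomputable def kappa (N : ℕ) (p : SSp N) : ℕ := sInf {j | p ∈ V N j}

/-- The difference operator
`H_m u (p) = Σ_{i = κ_p}^{m} Σ_{q ∈ U_{p,i}} (u(q) − u(p))`. -/
noncomputable def H (N m : ℕ) (u : SSp N → ℝ) (p : SSp N) : ℝ :=
  ∑ i ∈ Finset.Icc (kappa N p) m, ∑ q ∈ U N i p, (u q - u p)

/-- The Dirichlet form `E_{H_m}(u, v) = − Σ_{p ∈ V_m} u(p) · H_m v(p)`. -/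
noncomputable def EH (N m : ℕ) (u v : SSp N → ℝ) : ℝ :=
  -∑ p ∈ V N m, u p * H N m v p

/-- The cylinder set `[p_1 ⋯ p_m]`, determined by the first `m` coordinates of `p`. -/
def cyl (N m : ℕ) (p : SSp N) : Set (SSp N) := {x | ∀ i, i < m → x i = p i}

/-- `χ_p^m` : the indicator function of the cylinder set `[p_1 ⋯ p_{m+1}]`. -/
noncomputable def chi (N m : ℕ) (p : SSp N) : SSp N → ℝ :=
  (cyl N (m + 1) p).indicator 1

/-- `u ∈ dom E`: `u` is continuous and the energy
`E(u) = lim_m E_{H_m}(u|_{V_m})` exists (and is finite). -/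
def MemDomE (N : ℕ) (u : SSp N → ℝ) : Prop :=
  Continuous u ∧ ∃ L : ℝ, Tendsto (fun m => EH N m u u) atTop (nhds L)

/-- `v ∈ dom_M E`: `v` has finite energy and vanishes on the boundary `V_M`. -/
def MemDomME (N M : ℕ) (v : SSp N → ℝ) : Prop :=
  MemDomE N v ∧ ∀ p ∈ V N M, v p = 0

/-- `u ∈ 𝒟_M` with `Δ u = f` (strong formulation with boundary `V_M`):
`u` and `f` are continuous and
`lim_{m → ∞} max_{p ∈ V_m ∖ V_M} |N^{m+1} H_m u(p) − f(p)| = 0`. -/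
def IsLaplacianOn (N M : ℕ) (u f : SSp N → ℝ) : Prop :=
  Continuous u ∧ Continuous f ∧
    ∀ ε : ℝ, 0 < ε → ∃ m₀ : ℕ, ∀ m, m₀ ≤ m → ∀ p ∈ V N m, p ∉ V N M →
      |(N : ℝ) ^ (m + 1) * H N m u p - f p| < ε

/-- `u ∈ D_μ` with `Δ u = f` (original definition of the Laplacian):
`u` and `f` are continuous and
`lim_{m → ∞} max_{p ∈ V_m ∖ V_{m−1}} |N^{m+1} H_m u(p) − f(p)| = 0`
(the level is written `m+1` to avoid natural subtraction). -/
def IsLaplacianDmu (N : ℕ) (u f : SSp N → ℝ) : Prop :=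
  Continuous u ∧ Continuous f ∧
    ∀ ε : ℝ, 0 < ε → ∃ m₀ : ℕ, ∀ m, m₀ ≤ m → ∀ p ∈ V N (m + 1), p ∉ V N m →
      |(N : ℝ) ^ (m + 2) * H N (m + 1) u p - f p| < ε

/-- `μ` is the equidistributed Bernoulli measure:
`μ([p_1 ⋯ p_m]) = N^{−m}` for every cylinder set. -/
def IsBernoulli (N : ℕ) (μ : Measure (SSp N)) : Prop :=
  ∀ (m : ℕ) (p : SSp N), μ (cyl N m p) = (N : ENNReal)⁻¹ ^ m

/-- `ρ(x,y) = min {i : x_i ≠ y_i}` (1-based; `0`-based first disagreement plus one). -/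
noncomputable def rho (N : ℕ) (x y : SSp N) : ℕ := sInf {i | x i ≠ y i} + 1

/-- The matrix `(G_m)_{pq}`: `2/N` if `q = p`, `1/N` if `q ∈ U_{p,m}`, `0` otherwise. -/
noncomputable def Gmat (N m : ℕ) (p q : SSp N) : ℝ :=
  if q = p then 2 / N else if q ∈ U N m p then 1 / N else 0

/-- The Green's function
`g(x,y) = Σ_{m=1}^{ρ(x,y)−1} Σ_{r,s ∈ V_m ∖ V_{m−1}} (G_m)_{rs} χ_r^m(x) χ_s^m(y)`
for `ρ(x,y) > 1`, and `g(x,y) = 0` for `ρ(x,y) = 1` (the sum is then empty). -/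
noncomputable def greenFn (N : ℕ) (x y : SSp N) : ℝ :=
  ∑ m ∈ Finset.Icc 1 (rho N x y - 1),
    ∑ r ∈ (V N m).filter (fun r => r ∉ V N (m - 1)),
      ∑ s ∈ (V N m).filter (fun s => s ∉ V N (m - 1)),
        Gmat N m r s * chi N m r x * chi N m s y

/-- The Green's operator `G_μ f (x) = ∫_{Σ_N^+ ∖ {x}} g(x,y) f(y) dμ(y)`. -/
noncomputable def Gop (N : ℕ) (μ : Measure (SSp N)) (f : SSp N → ℝ) (x : SSp N) : ℝ :=
  ∫ y in ({x}ᶜ : Set (SSp N)), greenFn N x y * f y ∂μ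


/-! `H_m` is symmetric on `V_m`, because `q ∈ U_{p,i}` is a symmetric relation on `V_i`. Hence
`E_{H_m}(u, v) = -∑ v(p) H_m u(p)`, which is minus the mean over `V_m`, a set of `N ^ (m + 1)`
points, of `v(p) N ^ (m + 1) H_m u(p)`. Since `v` is bounded and vanishes on `V_M`, the factor
`N ^ (m + 1) H_m u` may be replaced by `f` at the cost of an error tending to `0`. Finally, the mean
over `V_m` of the continuous function `f v` is the integral of a function that is constant on
cylinders of length `m + 1`, and dominated convergence gives the limit `∫ f v dμ`. -/

open scoped BigOperators

section Means

lemma tendsto_expect_zero {ι κ : Type*} {l : Filter κ} {s : κ → Finset ι} {a : κ → ι → ℝ}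
    (h : ∀ ε > 0, ∀ᶠ k in l, ∀ i ∈ s k, |a k i| ≤ ε) :
    Tendsto (fun k => 𝔼 i ∈ s k, a k i) l (𝓝 0) := by
  rw [Metric.tendsto_nhds]
  intro ε hε
  filter_upwards [h (ε / 2) (half_pos hε)] with k hk
  rw [Real.dist_0_eq_abs]
  rcases (s k).eq_empty_or_nonempty with hs | hs
  · simpa [hs] using hε
  · calc |𝔼 i ∈ s k, a k i| ≤ 𝔼 i ∈ s k, |a k i| := abs_expect_le _ _
      _ ≤ ε / 2 := expect_le hs hk
      _ < ε := half_lt_self hε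

lemma integral_comp_eq_sum_measureReal_preimage {α β E : Type*} [MeasurableSpace α]
    [MeasurableSpace β] [MeasurableSingletonClass β] [NormedAddCommGroup E] [NormedSpace ℝ E]
    [CompleteSpace E] {μ : Measure α} [IsFiniteMeasure μ] {φ : α → β} (hφ : Measurable φ)
    {s : Finset β} (hs : ∀ x, φ x ∈ s) (g : β → E) :
    ∫ x, g (φ x) ∂μ = ∑ y ∈ s, μ.real (φ ⁻¹' {y}) • g y := by
  have hmeas (y : β) : MeasurableSet (φ ⁻¹' {y}) := hφ (measurableSet_singleton y)
  have hsum (x : α) : g (φ x) = ∑ y ∈ s, (φ ⁻¹' {y}).indicator (fun _ => g y) x := by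
    simp [Set.indicator_apply, hs]
  simp only [hsum]
  rw [integral_finsetSum _ fun y _ => (integrable_const (g y)).indicator (hmeas y)]
  simp only [integral_indicator_const _ (hmeas _)]

end Means

section Vertices

variable {N : ℕ}

lemma V_mono : Monotone (V N) := fun _ _ h _ hp =>
  mem_V.2 fun j hj => mem_V.1 hp j (h.trans hj)

lemma kappa_le_iff {m i : ℕ} {p : SSp N} (hp : p ∈ V N m) : kappa N p ≤ i ↔ p ∈ V N i :=
  ⟨fun h => V_mono h (Nat.sInf_mem (s := {j | p ∈ V N j}) ⟨m, hp⟩), fun h => Nat.sInf_le h⟩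

lemma card_V (m : ℕ) : #(V N m) = N ^ (m + 1) := by
  rw [V, card_image_of_injective]
  · simp
  · intro w w' h
    funext j
    simpa [Nat.lt_succ_iff.1 j.isLt] using congrFun h j

lemma mem_V_and_mem_U_comm {i : ℕ} {p q : SSp N} :
    p ∈ V N i ∧ q ∈ U N i p ↔ p ∈ U N i q ∧ q ∈ V N i := by
  simp only [U, mem_filter, ne_comm (a := q), eq_comm (a := q _)]
  tauto

end Vertices

section DirichletForm

variable {N : ℕ}

lemma sum_V_sum_U_comm (i : ℕ) (F : SSp N → SSp N → ℝ) :
    ∑ p ∈ V N i, ∑ q ∈ U N i p, F p q = ∑ q ∈ V N i, ∑ p ∈ U N i q, F p q :=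
  sum_comm' fun _ _ => mem_V_and_mem_U_comm

lemma EH_eq_sum_Iic (m : ℕ) (u v : SSp N → ℝ) :
    EH N m u v = ∑ i ∈ Iic m, ∑ p ∈ V N i, ∑ q ∈ U N i p, u p * (v p - v q) := by
  have hlevels (p : SSp N) (i : ℕ) :
      p ∈ V N m ∧ i ∈ Icc (kappa N p) m ↔ p ∈ V N i ∧ i ∈ Iic m := by
    simp only [mem_Icc, mem_Iic]
    constructor
    · rintro ⟨hp, hκ, hi⟩
      exact ⟨(kappa_le_iff hp).1 hκ, hi⟩
    · rintro ⟨hp, hi⟩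
      exact ⟨V_mono hi hp, (kappa_le_iff hp).2 hp, hi⟩
  simp only [EH, H, mul_sum, ← sum_neg_distrib, ← mul_neg, neg_sub]
  exact sum_comm' hlevels

lemma EH_comm (m : ℕ) (u v : SSp N → ℝ) : EH N m u v = EH N m v u := by
  simp only [EH_eq_sum_Iic, mul_sub, sum_sub_distrib]
  simp only [sum_V_sum_U_comm _ fun p q => u p * v q, mul_comm]

lemma EH_eq_neg_expect (m : ℕ) (u v : SSp N → ℝ) :
    EH N m u v = -𝔼 p ∈ V N m, u p * ((N : ℝ) ^ (m + 1) * H N m v p) := by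
  simp only [EH, ← card_mul_expect, card_V, mul_expect, Nat.cast_pow, mul_left_comm]

end DirichletForm

section BernoulliMeasure

/-- The point of `V_m` that agrees with `x` on the first `m + 1` coordinates. As a function of `x`
it discretizes the shift space: its fibres are the cylinders of length `m + 1`. -/
def vertexProj (N m : ℕ) (x : SSp N) : SSp N := fun j => x (min j m)

variable {N : ℕ}

lemma vertexProj_mem_V (m : ℕ) (x : SSp N) : vertexProj N m x ∈ V N m :=
  mem_V.2 fun i hi => by
    simp only [vertexProj, min_eq_right hi, min_eq_right (hi.trans i.le_succ)]

lemma vertexProj_preimage_singleton {m : ℕ} {p : SSp N} (hp : p ∈ V N m) :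
    vertexProj N m ⁻¹' {p} = cyl N (m + 1) p := by
  ext x
  constructor
  · rintro rfl i hi
    simp only [vertexProj, min_eq_left (Nat.lt_succ_iff.1 hi)]
  · intro hx
    funext j
    rw [vertexProj, hx _ (Nat.lt_succ_iff.2 (min_le_right j m))]
    rcases le_total j m with hj | hj
    · rw [min_eq_left hj]
    · rw [min_eq_right hj, const_from N m p (mem_V.1 hp) j hj]

lemma continuous_vertexProj (m : ℕ) : Continuous (vertexProj N m) :=
  continuous_pi fun _ => continuous_apply _

lemma tendsto_vertexProj (x : SSp N) : Tendsto (fun m => vertexProj N m x) atTop (𝓝 x) := by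
  refine tendsto_pi_nhds.2 fun j => tendsto_const_nhds.congr' ?_
  filter_upwards [eventually_ge_atTop j] with m hm
  simp only [vertexProj, min_eq_left hm]

namespace IsBernoulli

variable {μ : Measure (SSp N)}

lemma isFiniteMeasure (hμ : IsBernoulli N μ) : IsFiniteMeasure μ := by
  rcases isEmpty_or_nonempty (SSp N) with _ | ⟨⟨p⟩⟩
  · rw [μ.eq_zero_of_isEmpty]
    infer_instance
  · have huniv : cyl N 0 p = Set.univ := by simp [cyl]
    exact ⟨by simp [← huniv, hμ 0 p]⟩

lemma integral_comp_vertexProj (hμ : IsBernoulli N μ) (m : ℕ) (g : SSp N → ℝ) :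
    ∫ x, g (vertexProj N m x) ∂μ = 𝔼 p ∈ V N m, g p := by
  have := hμ.isFiniteMeasure
  have hweight : ∀ p ∈ V N m, μ.real (vertexProj N m ⁻¹' {p}) = ((N : ℝ) ^ (m + 1))⁻¹ := by
    intro p hp
    simp [vertexProj_preimage_singleton hp, measureReal_def, hμ (m + 1) p]
  calc ∫ x, g (vertexProj N m x) ∂μ
      = ∑ p ∈ V N m, μ.real (vertexProj N m ⁻¹' {p}) • g p :=
        integral_comp_eq_sum_measureReal_preimage (continuous_vertexProj m).measurable
          (vertexProj_mem_V m) g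
    _ = ∑ p ∈ V N m, ((N : ℝ) ^ (m + 1))⁻¹ * g p :=
        sum_congr rfl fun p hp => by rw [hweight p hp, smul_eq_mul]
    _ = 𝔼 p ∈ V N m, g p := by
        rw [expect_eq_sum_div_card, card_V, ← mul_sum, inv_mul_eq_div, Nat.cast_pow]

lemma tendsto_expect_V (hμ : IsBernoulli N μ) {g : SSp N → ℝ} (hg : Continuous g) :
    Tendsto (fun m => 𝔼 p ∈ V N m, g p) atTop (𝓝 (∫ x, g x ∂μ)) := by
  have := hμ.isFiniteMeasure
  obtain ⟨C, hC⟩ := (HasCompactSupport.of_compactSpace g).exists_bound_of_continuous hg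
  simp only [← hμ.integral_comp_vertexProj]
  exact tendsto_integral_of_dominated_convergence (fun _ => C)
    (fun m => (hg.comp (continuous_vertexProj m)).aestronglyMeasurable) (integrable_const C)
    (fun _ => ae_of_all _ fun _ => hC _)
    (ae_of_all _ fun x => (hg.tendsto x).comp (tendsto_vertexProj x))

end IsBernoulli

end BernoulliMeasure

namespace IsLaplacianOn

variable {N M : ℕ} {u f v : SSp N → ℝ}

lemma eventually_abs_mul_sub_le (huf : IsLaplacianOn N M u f) (hvc : Continuous v)
    (hv : ∀ p ∈ V N M, v p = 0) {ε : ℝ} (hε : 0 < ε) :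
    ∀ᶠ m in atTop, ∀ p ∈ V N m, |v p * (f p - (N : ℝ) ^ (m + 1) * H N m u p)| ≤ ε := by
  obtain ⟨C, hC⟩ := (HasCompactSupport.of_compactSpace v).exists_bound_of_continuous hvc
  have hvC (p : SSp N) : |v p| ≤ |C| + 1 :=
    ((hC p).trans (le_abs_self C)).trans (le_add_of_nonneg_right zero_le_one)
  obtain ⟨m₀, hm₀⟩ := huf.2.2 (ε / (|C| + 1)) (by positivity)
  filter_upwards [eventually_ge_atTop m₀] with m hm p hp
  by_cases hpM : p ∈ V N M
  · simpa [hv p hpM] using hε.le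
  · calc |v p * (f p - (N : ℝ) ^ (m + 1) * H N m u p)|
        = |v p| * |(N : ℝ) ^ (m + 1) * H N m u p - f p| := by rw [abs_mul, abs_sub_comm]
      _ ≤ (|C| + 1) * (ε / (|C| + 1)) := by gcongr; exacts [hvC p, (hm₀ m hm p hp hpM).le]
      _ = ε := by field_simp

lemma tendsto_EH_add_expect (huf : IsLaplacianOn N M u f) (hvc : Continuous v)
    (hv : ∀ p ∈ V N M, v p = 0) :
    Tendsto (fun m => EH N m u v + 𝔼 p ∈ V N m, f p * v p) atTop (𝓝 0) := by
  have herror (m : ℕ) : EH N m u v + 𝔼 p ∈ V N m, f p * v p =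
      𝔼 p ∈ V N m, v p * (f p - (N : ℝ) ^ (m + 1) * H N m u p) := by
    simp only [EH_comm m u v, EH_eq_neg_expect, neg_add_eq_sub, ← expect_sub_distrib, mul_sub,
      mul_comm (f _)]
  simp only [herror]
  exact tendsto_expect_zero fun ε hε => huf.eventually_abs_mul_sub_le hvc hv hε

end IsLaplacianOn

theorem statement7_general {N M : ℕ} {μ : Measure (SSp N)} (hμ : IsBernoulli N μ)
    {u f v : SSp N → ℝ} (huf : IsLaplacianOn N M u f) (hvc : Continuous v)
    (hv : ∀ p ∈ V N M, v p = 0) :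
    Tendsto (fun m => EH N m u v) atTop (𝓝 (-∫ x, f x * v x ∂μ)) := by
  have herror := huf.tendsto_EH_add_expect hvc hv
  have hmean := hμ.tendsto_expect_V (g := fun x => f x * v x) (huf.2.1.mul hvc)
  simpa only [add_sub_cancel_right, zero_sub] using herror.sub hmean

/-- strong implies weak: if `u ∈ 𝒟_M` with `Δu = f` in the strong
sense, then for every `v ∈ dom_M E`, `E(u,v) = −∫ f v dμ`. -/
theorem statement7 (N : ℕ) (hN : 2 ≤ N)
    (μ : Measure (SSp N)) [IsProbabilityMeasure μ] (hμ : IsBernoulli N μ)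
    (M : ℕ) (u f : SSp N → ℝ) (huf : IsLaplacianOn N M u f) :
    ∀ v : SSp N → ℝ, MemDomME N M v →
      Tendsto (fun m => EH N m u v) atTop (nhds (-∫ x, f x * v x ∂μ)) := by
  intro v hv
  exact statement7_general hμ huf hv.1.1 hv.2
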